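/- Let N = 7 and α ∈ ℝ. Define Ψ : {−1,+1}⁷ → ℂ by: Ψ = 4α² + 3α⁴ + α⁶ on (−,−,−,−,−,−,−); Ψ = 4α + 3α³ + α⁵ on the 7 cyclic shifts of (−,−,−,−,−,+,+); Ψ = 7α + α³ on the 7 cyclic shifts of (−,−,−,−,+,−,+) and on the 7 cyclic shifts of (−,−,−,+,−,−,+); Ψ = 1 + 5α² + 2α⁴ on the 7 cyclic shifts of (−,−,−,+,+,+,+); Ψ = 3 + 5α² on the 7 cyclic shifts of (−,−,+,−,+,+,+) and on the 7 cyclic shifts of (−,+,−,−,+,+,+); Ψ = 4 + 3α² + α⁴ on the 7 cyclic shifts of (−,−,+,+,−,+,+); Ψ = 7 + α² on the 7 cyclic shifts of (−,+,−,+,−,+,+); Ψ = 3α + 5α³ on the 7 cyclic shifts of (−,+,+,+,+,+,+); and Ψ(μ) = 0 for all other configurations μ. Then H(α) Ψ = −(7/4)(3+α²) · Ψ. -/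

import Mathlib

open Finset

/-- Spin configurations of length `N`: maps `ℤ/N → {−1,+1}` (spins encoded as units of `ℤ`). -/
abbrev Config (N : ℕ) : Type := ZMod N → ℤˣ

/-- The state space `V_N`: complex-valued functions on configurations. -/
abbrev StateSpace (N : ℕ) : Type := Config N → ℂ

/-- The spin value `μ_j` as a complex number (`+1` or `−1`). -/
def spin {N : ℕ} (μ : Config N) (j : ZMod N) : ℂ := ((μ j : ℤ) : ℂ)

/-- Flip the spin at site `j`. -/
def flipAt {N : ℕ} (μ : Config N) (j : ZMod N) : Config N :=
  Function.update μ j (-(μ j))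

/-- `μ^{(j,j+1)}`: the configuration `μ` with the spins at sites `j` and `j+1` (mod `N`) flipped. -/
def flipPair {N : ℕ} (μ : Config N) (j : ZMod N) : Config N :=
  flipAt (flipAt μ j) (j + 1)

/-- The periodic XYZ Hamiltonian with real couplings `Jx, Jy, Jz`:
`(H Ψ)(μ) = −(1/2) Σ_j [(Jx − Jy μ_j μ_{j+1}) Ψ(μ^{(j,j+1)}) + Jz μ_j μ_{j+1} Ψ(μ)]`. -/
noncomputable def Hxyz (N : ℕ) [NeZero N] (Jx Jy Jz : ℝ) (Ψ : StateSpace N) : StateSpace N :=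
  fun μ => -(1/2 : ℂ) * ∑ j : ZMod N,
    (((Jx : ℂ) - (Jy : ℂ) * spin μ j * spin μ (j + 1)) * Ψ (flipPair μ j)
      + (Jz : ℂ) * spin μ j * spin μ (j + 1) * Ψ μ)

/-- `H(α)`: the XYZ Hamiltonian with `Jx = 1+α`, `Jy = 1−α`, `Jz = (α²−1)/2`. -/
noncomputable def Halpha (N : ℕ) [NeZero N] (α : ℝ) : StateSpace N → StateSpace N :=
  Hxyz N (1 + α) (1 - α) ((α ^ 2 - 1) / 2)

/-- `ν` is a cyclic shift of `c`: `ν_j = c_{j+k}` for some `k`. -/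
def isShiftOf {N : ℕ} (ν c : Config N) : Prop := ∃ k : ZMod N, ∀ j, ν j = c (j + k)

instance {N : ℕ} [NeZero N] (ν c : Config N) : Decidable (isShiftOf ν c) :=
  inferInstanceAs (Decidable (∃ k : ZMod N, ∀ j, ν j = c (j + k)))

/-- The configuration whose spins are `+1` exactly on the set `s`. -/
def cfgOfPlus (N : ℕ) (s : Finset (ZMod N)) : Config N := fun j => if j ∈ s then 1 else -1

/-- The `N = 7` eigenvector, with the components listed in the statement. -/
noncomputable def Psi7 (α : ℝ) : StateSpace 7 := fun μ =>
  if μ = cfgOfPlus 7 ∅ then ((4 * α ^ 2 + 3 * α ^ 4 + α ^ 6 : ℝ) : ℂ)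
  else if isShiftOf μ (cfgOfPlus 7 {5, 6}) then ((4 * α + 3 * α ^ 3 + α ^ 5 : ℝ) : ℂ)
  else if isShiftOf μ (cfgOfPlus 7 {4, 6}) ∨ isShiftOf μ (cfgOfPlus 7 {3, 6}) then
    ((7 * α + α ^ 3 : ℝ) : ℂ)
  else if isShiftOf μ (cfgOfPlus 7 {3, 4, 5, 6}) then ((1 + 5 * α ^ 2 + 2 * α ^ 4 : ℝ) : ℂ)
  else if isShiftOf μ (cfgOfPlus 7 {2, 4, 5, 6}) ∨ isShiftOf μ (cfgOfPlus 7 {1, 4, 5, 6}) then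
    ((3 + 5 * α ^ 2 : ℝ) : ℂ)
  else if isShiftOf μ (cfgOfPlus 7 {2, 3, 5, 6}) then ((4 + 3 * α ^ 2 + α ^ 4 : ℝ) : ℂ)
  else if isShiftOf μ (cfgOfPlus 7 {1, 3, 5, 6}) then ((7 + α ^ 2 : ℝ) : ℂ)
  else if isShiftOf μ (cfgOfPlus 7 {1, 2, 3, 4, 5, 6}) then ((3 * α + 5 * α ^ 3 : ℝ) : ℂ)
  else 0

/-!
`H(α)` flips neighbouring pairs of spins: a bond with equal spins contributes a flip with
weight `α`, a bond with opposite spins (a domain wall) one with weight `1`. At a configuration `μ`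
with `w` domain walls, the eigenvalue equation for `-(N/4)(3 + α²)` therefore reads
`∑ⱼ weightⱼ · Ψ(μ^{(j,j+1)}) = (N + w (α² - 1) / 2) · Ψ(μ)`.

Since `H` commutes with translations, a vector that is constant on a family of translation orbits
closed under pair flips, and zero elsewhere, has to be tested at one representative of each orbit
only. The ten orbits supporting `Psi7` are closed under pair flips, which leaves ten polynomial
identities in `α`.
-/

section Translation

variable {N : ℕ}

/-- The cyclic shift of a configuration by `k` sites, as the operation underlying the relation
`isShiftOf`. -/
def shift (k : ZMod N) (μ : Config N) : Config N := fun j => μ (j + k)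

theorem isShiftOf_iff_exists_eq_shift {ν c : Config N} :
    isShiftOf ν c ↔ ∃ k, ν = shift k c :=
  exists_congr fun _ => funext_iff.symm

theorem isShiftOf_shift (k : ZMod N) (μ : Config N) : isShiftOf (shift k μ) μ :=
  ⟨k, fun _ => rfl⟩

theorem isShiftOf.symm {μ ν : Config N} : isShiftOf μ ν → isShiftOf ν μ := by
  rintro ⟨k, h⟩
  exact ⟨-k, fun j => by rw [h, neg_add_cancel_right]⟩

theorem isShiftOf.trans {μ ν ρ : Config N} : isShiftOf μ ν → isShiftOf ν ρ → isShiftOf μ ρ := by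
  rintro ⟨k, h⟩ ⟨l, h'⟩
  exact ⟨k + l, fun j => by rw [h, h', add_assoc]⟩

theorem flipAt_shift (k j : ZMod N) (μ : Config N) :
    flipAt (shift k μ) j = shift k (flipAt μ (j + k)) := by
  funext i
  simp only [flipAt, shift, Function.update_apply, add_left_inj]

theorem flipPair_shift (k j : ZMod N) (μ : Config N) :
    flipPair (shift k μ) j = shift k (flipPair μ (j + k)) := by
  rw [flipPair, flipAt_shift, flipAt_shift, flipPair, add_right_comm]

theorem flipAt_flipAt (μ : Config N) (j : ZMod N) : flipAt (flipAt μ j) j = μ := by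
  simp [flipAt]

theorem flipAt_comm (μ : Config N) (i j : ZMod N) :
    flipAt (flipAt μ i) j = flipAt (flipAt μ j) i := by
  obtain rfl | h := eq_or_ne i j
  · rfl
  · simp only [flipAt, Function.update_of_ne h, Function.update_of_ne h.symm]
    exact Function.update_comm h _ _ _

theorem flipPair_flipPair (μ : Config N) (j : ZMod N) : flipPair (flipPair μ j) j = μ := by
  rw [flipPair, flipPair, flipAt_comm _ (j + 1) j, flipAt_flipAt, flipAt_flipAt]

theorem isShiftOf_flipPair_shift {ι : Type*} {rep : ι → Config N} {flipClass : ι → ZMod N → ι}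
    (hflip : ∀ i j, isShiftOf (flipPair (rep i) j) (rep (flipClass i j)))
    (i : ι) (k j : ZMod N) :
    isShiftOf (flipPair (shift k (rep i)) j) (rep (flipClass i (j + k))) := by
  rw [flipPair_shift]
  exact (isShiftOf_shift _ _).trans (hflip i _)

end Translation

section OrbitReduction

variable {N : ℕ} [NeZero N]

/-- The row of the XYZ Hamiltonian at `μ`, as a linear form in the component `z` at `μ` and the
components `f j` at the configurations `flipPair μ j`. Keeping `f` and `z` independent of a state
allows them to be read off from orbit representatives. -/
noncomputable def hxyzRow (Jx Jy Jz : ℝ) (μ : Config N) (f : ZMod N → ℂ) (z : ℂ) : ℂ :=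
  -(1/2 : ℂ) * ∑ j : ZMod N,
    (((Jx : ℂ) - (Jy : ℂ) * spin μ j * spin μ (j + 1)) * f j
      + (Jz : ℂ) * spin μ j * spin μ (j + 1) * z)

theorem hxyz_apply (Jx Jy Jz : ℝ) (Ψ : StateSpace N) (μ : Config N) :
    Hxyz N Jx Jy Jz Ψ μ = hxyzRow Jx Jy Jz μ (fun j => Ψ (flipPair μ j)) (Ψ μ) :=
  rfl

theorem hxyzRow_shift (Jx Jy Jz : ℝ) (k : ZMod N) (μ : Config N) (f : ZMod N → ℂ) (z : ℂ) :
    hxyzRow Jx Jy Jz (shift k μ) (fun j => f (j + k)) z = hxyzRow Jx Jy Jz μ f z := by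
  unfold hxyzRow
  congr 1
  refine Fintype.sum_equiv (Equiv.addRight k) _ _ fun j => ?_
  simp only [spin, shift, Equiv.coe_addRight, add_right_comm j 1 k]

theorem hxyz_eq_smul_of_orbits {ι : Type*} {rep : ι → Config N} {flipClass : ι → ZMod N → ι}
    {Jx Jy Jz : ℝ} {E : ℂ} {Ψ : StateSpace N} {a : ι → ℂ}
    (hflip : ∀ i j, isShiftOf (flipPair (rep i) j) (rep (flipClass i j)))
    (hon : ∀ i μ, isShiftOf μ (rep i) → Ψ μ = a i)
    (hoff : ∀ μ, (∀ i, ¬ isShiftOf μ (rep i)) → Ψ μ = 0)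
    (hrow : ∀ i, hxyzRow Jx Jy Jz (rep i) (fun j => a (flipClass i j)) (a i) = E * a i) :
    Hxyz N Jx Jy Jz Ψ = E • Ψ := by
  funext μ
  rw [hxyz_apply, Pi.smul_apply, smul_eq_mul]
  by_cases hμ : ∃ i, isShiftOf μ (rep i)
  · obtain ⟨i, hi⟩ := hμ
    obtain ⟨k, rfl⟩ := isShiftOf_iff_exists_eq_shift.mp hi
    have hΨ_flip (j : ZMod N) : Ψ (flipPair (shift k (rep i)) j) = a (flipClass i (j + k)) :=
      hon _ _ (isShiftOf_flipPair_shift hflip i k j)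
    simp only [hΨ_flip, hon i _ hi]
    rw [hxyzRow_shift Jx Jy Jz k (rep i) fun j => a (flipClass i j), hrow]
  · rw [not_exists] at hμ
    have hΨ_flip (j : ZMod N) : Ψ (flipPair μ j) = 0 := by
      refine hoff _ fun i hi => ?_
      obtain ⟨k, hk⟩ := isShiftOf_iff_exists_eq_shift.mp hi
      apply hμ (flipClass i (j + k))
      rw [← flipPair_flipPair μ j, hk]
      exact isShiftOf_flipPair_shift hflip i k j
    simp [hxyzRow, hΨ_flip, hoff μ hμ]

end OrbitReduction

section DomainWalls

variable {N : ℕ}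

/-- The weight with which `H(α)` flips the bond `(j, j+1)`, up to the global factor `-1`. -/
noncomputable def bondWeight (α : ℝ) (μ : Config N) (j : ZMod N) : ℂ :=
  if μ j = μ (j + 1) then α else 1

/-- The number of domain walls, i.e. of bonds `(j, j+1)` with opposite spins. -/
def wallCount [NeZero N] (μ : Config N) : ℕ := #{j | μ j ≠ μ (j + 1)}

theorem spin_mul_spin (μ : Config N) (i j : ZMod N) :
    spin μ i * spin μ j = if μ i = μ j then 1 else -1 := by
  unfold spin
  obtain hi | hi := Int.units_eq_one_or (μ i) <;> obtain hj | hj := Int.units_eq_one_or (μ j) <;>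
    simp [hi, hj]

theorem bondWeight_eq_spin_mul_spin (α : ℝ) (μ : Config N) (j : ZMod N) :
    bondWeight α μ j = ((1 + α) - (1 - α) * (spin μ j * spin μ (j + 1))) / 2 := by
  rw [bondWeight, spin_mul_spin]
  split_ifs <;> ring

theorem sum_spin_mul_spin_succ [NeZero N] (μ : Config N) :
    ∑ j, spin μ j * spin μ (j + 1) = N - 2 * wallCount μ := by
  have h (j : ZMod N) :
      spin μ j * spin μ (j + 1) = 1 - 2 * if μ j ≠ μ (j + 1) then (1 : ℂ) else 0 := by
    rw [spin_mul_spin, ite_not]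
    split_ifs <;> norm_num
  simp only [h, sum_sub_distrib, ← mul_sum, sum_boole, wallCount]
  simp [ZMod.card]

theorem hxyzRow_eq_bondWeight [NeZero N] (α : ℝ) (μ : Config N) (f : ZMod N → ℂ) (z : ℂ) :
    hxyzRow (1 + α) (1 - α) ((α ^ 2 - 1) / 2) μ f z =
      -(N / 4 : ℂ) * (3 + α ^ 2) * z
        + ((N + wallCount μ * (α ^ 2 - 1) / 2) * z - ∑ j, bondWeight α μ j * f j) := by
  have hterm (j : ZMod N) :
      (((1 + α : ℝ) : ℂ) - ((1 - α : ℝ) : ℂ) * spin μ j * spin μ (j + 1)) * f j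
          + (((α ^ 2 - 1) / 2 : ℝ) : ℂ) * spin μ j * spin μ (j + 1) * z =
        2 * (bondWeight α μ j * f j) + (α ^ 2 - 1) / 2 * z * (spin μ j * spin μ (j + 1)) := by
    rw [bondWeight_eq_spin_mul_spin]
    push_cast
    ring
  simp only [hxyzRow, hterm, sum_add_distrib, ← mul_sum, sum_spin_mul_spin_succ]
  ring

theorem halpha_eq_smul_of_orbits [NeZero N] {ι : Type*} {rep : ι → Config N}
    {flipClass : ι → ZMod N → ι} {α : ℝ} {Ψ : StateSpace N} {a : ι → ℂ}
    (hflip : ∀ i j, isShiftOf (flipPair (rep i) j) (rep (flipClass i j)))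
    (hon : ∀ i μ, isShiftOf μ (rep i) → Ψ μ = a i)
    (hoff : ∀ μ, (∀ i, ¬ isShiftOf μ (rep i)) → Ψ μ = 0)
    (hwall : ∀ i, ∑ j, bondWeight α (rep i) j * a (flipClass i j) =
      (N + wallCount (rep i) * (α ^ 2 - 1) / 2) * a i) :
    Halpha N α Ψ = ((-(N / 4) * (3 + α ^ 2) : ℝ) : ℂ) • Ψ := by
  refine hxyz_eq_smul_of_orbits hflip hon hoff fun i => ?_
  rw [hxyzRow_eq_bondWeight, hwall, sub_self, add_zero]
  push_cast
  rfl

end DomainWalls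

section SevenSites

/-- Representatives of the ten translation orbits on which `Psi7` is supported. -/
def orbitRep : Fin 10 → Config 7 :=
  ![cfgOfPlus 7 ∅,
    cfgOfPlus 7 {5, 6},
    cfgOfPlus 7 {4, 6},
    cfgOfPlus 7 {3, 6},
    cfgOfPlus 7 {3, 4, 5, 6},
    cfgOfPlus 7 {2, 4, 5, 6},
    cfgOfPlus 7 {1, 4, 5, 6},
    cfgOfPlus 7 {2, 3, 5, 6},
    cfgOfPlus 7 {1, 3, 5, 6},
    cfgOfPlus 7 {1, 2, 3, 4, 5, 6}]

/-- The value of `Psi7 α` on the orbit of each `orbitRep i`. -/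
noncomputable def orbitAmplitude (α : ℝ) : Fin 10 → ℂ :=
  ![4 * α ^ 2 + 3 * α ^ 4 + α ^ 6,
    4 * α + 3 * α ^ 3 + α ^ 5,
    7 * α + α ^ 3,
    7 * α + α ^ 3,
    1 + 5 * α ^ 2 + 2 * α ^ 4,
    3 + 5 * α ^ 2,
    3 + 5 * α ^ 2,
    4 + 3 * α ^ 2 + α ^ 4,
    7 + α ^ 2,
    3 * α + 5 * α ^ 3]

/-- The index of the orbit reached from `orbitRep i` by flipping the bond `(j, j+1)`; the rows are
indexed by `i` and the columns by `j`, where `ZMod 7` unfolds to `Fin 7`. -/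
def orbitFlip : Fin 10 → Fin 7 → Fin 10 :=
  ![![1, 1, 1, 1, 1, 1, 1],
    ![4, 7, 7, 4, 2, 0, 2],
    ![5, 8, 6, 3, 1, 1, 3],
    ![6, 5, 3, 2, 4, 2, 3],
    ![9, 9, 5, 1, 3, 1, 6],
    ![9, 6, 4, 7, 3, 2, 8],
    ![4, 5, 9, 8, 2, 3, 7],
    ![9, 8, 1, 5, 6, 1, 8],
    ![5, 7, 7, 6, 8, 2, 8],
    ![9, 4, 6, 7, 5, 4, 9]]

theorem isShiftOf_flipPair_orbitRep :
    ∀ i j, isShiftOf (flipPair (orbitRep i) j) (orbitRep (orbitFlip i j)) := by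
  decide +kernel

theorem isShiftOf_orbitRep_orbitRep_iff :
    ∀ i i', isShiftOf (orbitRep i) (orbitRep i') ↔ i = i' := by
  decide +kernel

theorem wallCount_orbitRep :
    ∀ i, wallCount (orbitRep i) = ![0, 2, 4, 4, 2, 4, 4, 4, 6, 2] i := by
  decide +kernel

theorem isShiftOf_orbitRep_iff_eq {μ : Config 7} {i : Fin 10} (h : isShiftOf μ (orbitRep i))
    (i' : Fin 10) : isShiftOf μ (orbitRep i') ↔ i = i' := by
  rw [← isShiftOf_orbitRep_orbitRep_iff]
  exact ⟨h.symm.trans, h.trans⟩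

theorem eq_cfgOfPlus_empty_iff_isShiftOf {N : ℕ} {μ : Config N} :
    μ = cfgOfPlus N ∅ ↔ isShiftOf μ (cfgOfPlus N ∅) := by
  simp [isShiftOf, cfgOfPlus, funext_iff]

theorem psi7_eq_ite_orbitRep (α : ℝ) (μ : Config 7) :
    Psi7 α μ =
      if isShiftOf μ (orbitRep 0) then orbitAmplitude α 0
      else if isShiftOf μ (orbitRep 1) then orbitAmplitude α 1
      else if isShiftOf μ (orbitRep 2) ∨ isShiftOf μ (orbitRep 3) then orbitAmplitude α 2
      else if isShiftOf μ (orbitRep 4) then orbitAmplitude α 4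
      else if isShiftOf μ (orbitRep 5) ∨ isShiftOf μ (orbitRep 6) then orbitAmplitude α 5
      else if isShiftOf μ (orbitRep 7) then orbitAmplitude α 7
      else if isShiftOf μ (orbitRep 8) then orbitAmplitude α 8
      else if isShiftOf μ (orbitRep 9) then orbitAmplitude α 9
      else 0 := by
  simp only [Psi7, eq_cfgOfPlus_empty_iff_isShiftOf]
  push_cast
  rfl

theorem psi7_of_isShiftOf_orbitRep (α : ℝ) {μ : Config 7} {i : Fin 10}
    (h : isShiftOf μ (orbitRep i)) : Psi7 α μ = orbitAmplitude α i := by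
  simp only [psi7_eq_ite_orbitRep, isShiftOf_orbitRep_iff_eq h]
  fin_cases i <;> simp [orbitAmplitude]

theorem psi7_eq_zero_of_forall_not_isShiftOf (α : ℝ) {μ : Config 7}
    (h : ∀ i, ¬ isShiftOf μ (orbitRep i)) : Psi7 α μ = 0 := by
  simp [psi7_eq_ite_orbitRep, h]

theorem sum_bondWeight_mul_comp_orbitFlip (α : ℝ) (a : Fin 10 → ℂ) (i : Fin 10) :
    ∑ j, bondWeight α (orbitRep i) j * a (orbitFlip i j) =
      ![α * (7 * a 1),
        α * (a 0 + 2 * a 4 + 2 * a 7) + (2 * a 2),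
        α * (a 5 + a 6 + a 8) + (2 * a 1 + 2 * a 3),
        α * (a 4 + a 5 + a 6) + (2 * a 2 + 2 * a 3),
        α * (2 * a 1 + a 3 + 2 * a 9) + (a 5 + a 6),
        α * (a 2 + a 3 + a 9) + (a 4 + a 6 + a 7 + a 8),
        α * (a 2 + a 3 + a 9) + (a 4 + a 5 + a 7 + a 8),
        α * (2 * a 1 + a 9) + (a 5 + a 6 + 2 * a 8),
        α * a 2 + (a 5 + a 6 + 2 * a 7 + 2 * a 8),
        α * (2 * a 4 + a 5 + a 6 + a 7) + (2 * a 9)] i := by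
  refine (Fin.sum_univ_seven _).trans ?_
  fin_cases i <;> simp +decide only [bondWeight, if_true, if_false] <;>
    simp only [orbitFlip, Fin.zero_eta, Fin.mk_one, Fin.reduceFinMk, Matrix.cons_val] <;> ring

theorem sum_bondWeight_mul_orbitAmplitude (α : ℝ) (i : Fin 10) :
    ∑ j, bondWeight α (orbitRep i) j * orbitAmplitude α (orbitFlip i j) =
      (7 + wallCount (orbitRep i) * (α ^ 2 - 1) / 2) * orbitAmplitude α i := by
  rw [sum_bondWeight_mul_comp_orbitFlip, wallCount_orbitRep]
  fin_cases i <;>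
    simp only [orbitAmplitude, Fin.zero_eta, Fin.mk_one, Fin.reduceFinMk, Matrix.cons_val] <;>
    push_cast <;> ring

end SevenSites

/-- For `N = 7`, the displayed vector is an eigenvector of `H(α)` with eigenvalue
`−(7/4)(3+α²)`. -/
theorem psi7_eigenvector (α : ℝ) :
    Halpha 7 α (Psi7 α) = ((-(7 / 4) * (3 + α ^ 2) : ℝ) : ℂ) • Psi7 α := by
  exact_mod_cast halpha_eq_smul_of_orbits isShiftOf_flipPair_orbitRep
    (fun _ _ => psi7_of_isShiftOf_orbitRep α)
    (fun _ => psi7_eq_zero_of_forall_not_isShiftOf α)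
    (sum_bondWeight_mul_orbitAmplitude α)
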